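/- The function W̄ is infinitely differentiable on ℝ, and its derivatives at the origin satisfy: W̄(0) = 0, W̄'(0) = −1, W̄''(0) = 0, W̄'''(0) = 6, and the iterated derivative of order 2k of W̄ vanishes at 0 for every natural number k (i.e., W̄^{(2k)}(0) = 0 for all k ≥ 0). -/

import Mathlib

/-- The stable self-similar Burgers profile `W̄`. -/
noncomputable def Wbar (y : ℝ) : ℝ :=
  (-y / 2 + Real.sqrt (1 / 27 + y ^ 2 / 4)) ^ ((1 : ℝ) / 3) -
  (y / 2 + Real.sqrt (1 / 27 + y ^ 2 / 4)) ^ ((1 : ℝ) / 3)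

lemma Wbar_pos1 (y : ℝ) : 0 < -y / 2 + Real.sqrt (1 / 27 + y ^ 2 / 4) := by
  have : y / 2 < Real.sqrt (1 / 27 + y ^ 2 / 4) := by
    apply Real.lt_sqrt_of_sq_lt
    nlinarith
  linarith

lemma Wbar_pos2 (y : ℝ) : 0 < y / 2 + Real.sqrt (1 / 27 + y ^ 2 / 4) := by
  have h := Wbar_pos1 (-y)
  simpa using h

lemma Wbar_contDiff : ContDiff ℝ (⊤ : ℕ∞) Wbar := by
  have hs : ContDiff ℝ (⊤ : ℕ∞) (fun y : ℝ => Real.sqrt (1 / 27 + y ^ 2 / 4)) := by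
    apply ContDiff.sqrt
    · fun_prop
    · intro y
      positivity
  unfold Wbar
  apply ContDiff.sub
  · apply ContDiff.rpow_const_of_ne
    · exact ContDiff.add (by fun_prop) hs
    · intro y
      exact (Wbar_pos1 y).ne'
  · apply ContDiff.rpow_const_of_ne
    · exact ContDiff.add (by fun_prop) hs
    · intro y
      exact (Wbar_pos2 y).ne'

lemma Wbar_odd (y : ℝ) : Wbar (-y) = - Wbar y := by
  simp [Wbar]

lemma Wbar_zero : Wbar 0 = 0 := by
  simp [Wbar]

lemma Wbar_cubic (y : ℝ) : Wbar y ^ 3 + Wbar y = -y := by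
  have h1 := Wbar_pos1 y
  have h2 := Wbar_pos2 y
  have hs : Real.sqrt (1 / 27 + y ^ 2 / 4) ^ 2 = 1 / 27 + y ^ 2 / 4 :=
    Real.sq_sqrt (by positivity)
  unfold Wbar
  set s := Real.sqrt (1 / 27 + y ^ 2 / 4)
  have ha : ((-y / 2 + s) ^ ((1 : ℝ) / 3)) ^ 3 = -y / 2 + s := by
    rw [← Real.rpow_natCast, ← Real.rpow_mul h1.le]
    norm_num
  have hb : ((y / 2 + s) ^ ((1 : ℝ) / 3)) ^ 3 = y / 2 + s := by
    rw [← Real.rpow_natCast, ← Real.rpow_mul h2.le]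
    norm_num
  have hab : (-y / 2 + s) ^ ((1 : ℝ) / 3) * (y / 2 + s) ^ ((1 : ℝ) / 3) = 1 / 3 := by
    rw [← Real.mul_rpow h1.le h2.le]
    have : (-y / 2 + s) * (y / 2 + s) = (1 / 3) ^ (3 : ℝ) := by
      norm_num
      linarith
    rw [this, ← Real.rpow_mul (by norm_num)]
    norm_num
  generalize (-y / 2 + s) ^ ((1 : ℝ) / 3) = a at *
  generalize (y / 2 + s) ^ ((1 : ℝ) / 3) = b at *
  linear_combination ha - hb - 3 * (a - b) * hab

lemma Wbar_hasDerivAt (y : ℝ) : HasDerivAt Wbar (-1 / (1 + 3 * Wbar y ^ 2)) y := by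
  have hd : HasDerivAt Wbar (deriv Wbar y) y :=
    (Wbar_contDiff.differentiable (by simp) y).hasDerivAt
  have h1 := (hd.pow 3).add hd
  have h2 : HasDerivAt (fun y : ℝ => -y) (-1) y := hasDerivAt_neg y
  have he : Wbar ^ 3 + Wbar = fun y : ℝ => -y := funext Wbar_cubic
  rw [he] at h1
  have h3 := h1.unique h2
  have hp : (1 + 3 * Wbar y ^ 2) ≠ 0 := by positivity
  have : deriv Wbar y = -1 / (1 + 3 * Wbar y ^ 2) := by
    rw [eq_div_iff hp]
    norm_num at h3
    linarith
  rwa [this] at hd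

lemma Wbar_deriv : deriv Wbar = fun y => -1 / (1 + 3 * Wbar y ^ 2) :=
  funext fun y => (Wbar_hasDerivAt y).deriv

lemma Wbar_deriv2 : iteratedDeriv 2 Wbar = fun y => -6 * Wbar y / (1 + 3 * Wbar y ^ 2) ^ 3 := by
  rw [iteratedDeriv_succ, iteratedDeriv_one, Wbar_deriv]
  funext y
  have hp : (1 + 3 * Wbar y ^ 2) ≠ 0 := by positivity
  have h := (hasDerivAt_const y (-1 : ℝ)).fun_div
    ((((Wbar_hasDerivAt y).fun_pow 2).const_mul 3).const_add 1) hp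
  rw [h.deriv]
  field_simp
  norm_num
  ring

lemma Wbar_deriv3 : iteratedDeriv 3 Wbar 0 = 6 := by
  rw [iteratedDeriv_succ, Wbar_deriv2]
  have hp : (1 + 3 * Wbar 0 ^ 2) ^ 3 ≠ 0 := by positivity
  have h := ((Wbar_hasDerivAt 0).const_mul (-6)).fun_div
    (((((Wbar_hasDerivAt 0).fun_pow 2).const_mul 3).const_add 1).fun_pow 3) hp
  rw [h.deriv]
  simp [Wbar_zero]

lemma Wbar_even_deriv (k : ℕ) : iteratedDeriv (2 * k) Wbar 0 = 0 := by
  have h := iteratedDeriv_comp_neg (2 * k) Wbar 0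
  have he : (fun x => Wbar (-x)) = -Wbar := funext Wbar_odd
  rw [he, iteratedDeriv_neg] at h
  simp at h
  linarith

/-- `W̄` is smooth, with `W̄(0) = 0`, `W̄'(0) = −1`, `W̄''(0) = 0`, `W̄'''(0) = 6`, and all
even-order derivatives of `W̄` vanish at the origin. -/
theorem Wbar_smooth_derivs_at_zero :
    ContDiff ℝ (⊤ : ℕ∞) Wbar ∧
    Wbar 0 = 0 ∧
    deriv Wbar 0 = -1 ∧
    iteratedDeriv 2 Wbar 0 = 0 ∧
    iteratedDeriv 3 Wbar 0 = 6 ∧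
    (∀ k : ℕ, iteratedDeriv (2 * k) Wbar 0 = 0) := by
  refine ⟨Wbar_contDiff, Wbar_zero, ?_, Wbar_even_deriv 1, Wbar_deriv3, Wbar_even_deriv⟩
  simp [Wbar_deriv, Wbar_zero]
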